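/- Assume the gain conditions: λ_min(K_s) ≥ 1 + k_{n2}·(k_θ·N·λ_d·ρ̄₃)² + k_{n4}·ρ₃(t)² for all t ≥ 0, α₂·k·m₁ ≥ α₂ + k_{n2}·(k_θ·N·λ_d·ρ̄₃)² + k_{n3}·ρ₄(t)² + k_{n4}·ρ₃(t)² for all t ≥ 0, min{α₁, α₃} ≥ 1, k_{n2} > 1/(4·k_θ·λ̲), k_{n3} > 1/(4·min{α₁, α₂, α₃}) and k_{n4} ≥ 1/2. Then every solution of the closed-loop composite-adaptation output-feedback system is such that v(t) = (e(t), e_f(t), η(t), θ̃(t)) is bounded on [0,∞) and v(t) → 0 as t → ∞; in particular the tracking error e(t) and the parameter estimation error θ̃(t) converge to the origin. -/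

import Mathlib

open Matrix Filter
open scoped BigOperators Topology

/-- Euclidean norm of a vector in `Fin m → ℝ`. -/
noncomputable def eunorm {m : ℕ} (v : Fin m → ℝ) : ℝ :=
  Real.sqrt (∑ i, (v i) ^ 2)

lemma eun_sq {m : ℕ} (v : Fin m → ℝ) : eunorm v ^ 2 = v ⬝ᵥ v := by
  unfold eunorm
  rw [Real.sq_sqrt (Finset.sum_nonneg fun i _ => sq_nonneg _)]
  simp [dotProduct, sq]

lemma eun_nonneg {m : ℕ} (v : Fin m → ℝ) : 0 ≤ eunorm v := Real.sqrt_nonneg _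

lemma eun_cs {m : ℕ} (a b : Fin m → ℝ) : |a ⬝ᵥ b| ≤ eunorm a * eunorm b := by
  apply abs_le_of_sq_le_sq _ (mul_nonneg (eun_nonneg a) (eun_nonneg b))
  rw [mul_pow, eun_sq, eun_sq]
  have := Finset.sum_mul_sq_le_sq_mul_sq Finset.univ a b
  simpa [dotProduct, sq] using this

lemma quad_deriv {m : ℕ} (A : ℝ → Matrix (Fin m) (Fin m) ℝ) (A' : Matrix (Fin m) (Fin m) ℝ)
    (x : ℝ → Fin m → ℝ) (x' : Fin m → ℝ) (t : ℝ)
    (hA : ∀ i j, HasDerivAt (fun s => A s i j) (A' i j) t) (hx : HasDerivAt x x' t)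
    (hs : (A t)ᵀ = A t) :
    HasDerivAt (fun s => x s ⬝ᵥ (A s).mulVec (x s))
      (2 * (x t ⬝ᵥ (A t).mulVec x') + x t ⬝ᵥ A'.mulVec (x t)) t := by
  have hx' := hasDerivAt_pi.1 hx
  have h1 : HasDerivAt (fun s => ∑ i, x s i * ∑ j, A s i j * x s j)
      (∑ i, (x' i * (∑ j, A t i j * x t j) + x t i * ∑ j, (A' i j * x t j + A t i j * x' j))) t := by
    apply HasDerivAt.fun_sum
    intro i _
    apply (hx' i).mul
    apply HasDerivAt.fun_sum
    intro j _
    exact (hA i j).mul (hx' j)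
  have h2 : x' ⬝ᵥ (A t).mulVec (x t) = x t ⬝ᵥ (A t).mulVec x' := by
    rw [dotProduct_mulVec, ← mulVec_transpose, hs, dotProduct_comm]
  refine HasDerivAt.congr_deriv (f := fun s => x s ⬝ᵥ (A s).mulVec (x s)) h1 ?_
  simp only [Finset.sum_add_distrib, mul_add]
  have e1 : ∑ i, x' i * ∑ j, A t i j * x t j = x' ⬝ᵥ (A t).mulVec (x t) := rfl
  have e2 : ∑ i, x t i * ∑ j, A t i j * x' j = x t ⬝ᵥ (A t).mulVec x' := rfl
  have e3 : ∑ i, x t i * ∑ j, A' i j * x t j = x t ⬝ᵥ A'.mulVec (x t) := rfl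
  rw [e1, e2, e3, h2]; ring

lemma quad_bound {m : ℕ} (A : Matrix (Fin m) (Fin m) ℝ) :
    ∃ K : ℝ, 0 ≤ K ∧ ∀ x : Fin m → ℝ, x ⬝ᵥ A.mulVec x ≤ K * eunorm x ^ 2 := by
  refine ⟨∑ i, ∑ j, |A i j|, by positivity, fun x => ?_⟩
  have hb : ∀ i, |x i| ≤ eunorm x := fun i => by
    apply Real.abs_le_sqrt
    exact Finset.single_le_sum (f := fun i => x i ^ 2) (fun i _ => sq_nonneg _) (Finset.mem_univ i)
  have e1 : x ⬝ᵥ A.mulVec x = ∑ i, ∑ j, x i * (A i j * x j) := by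
    simp [dotProduct, mulVec, Finset.mul_sum]
  rw [e1, Finset.sum_mul]
  refine Finset.sum_le_sum fun i _ => ?_
  rw [Finset.sum_mul]
  refine Finset.sum_le_sum fun j _ => ?_
  calc x i * (A i j * x j) ≤ |x i * (A i j * x j)| := le_abs_self _
    _ = |A i j| * (|x i| * |x j|) := by rw [abs_mul, abs_mul]; ring
    _ ≤ |A i j| * (eunorm x * eunorm x) := by
      gcongr
      · exact eun_nonneg x
      · exact hb i
      · exact hb j
    _ = _ := by ring

lemma mulVec_bound {m n : ℕ} (c : ℝ) : ∃ K : ℝ, 0 ≤ K ∧ ∀ A : Matrix (Fin m) (Fin n) ℝ,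
    (∀ i j, |A i j| ≤ c) → ∀ x : Fin n → ℝ, x ⬝ᵥ (Aᵀ * A).mulVec x ≤ K * eunorm x ^ 2 := by
  refine ⟨∑ _i : Fin m, (n * c ^ 2), by positivity, fun A hA x => ?_⟩
  rw [← mulVec_mulVec, dotProduct_mulVec, vecMul_transpose]
  rw [Finset.sum_mul]
  refine Finset.sum_le_sum fun i _ => ?_
  have h := Finset.sum_mul_sq_le_sq_mul_sq Finset.univ (A i) x
  have h2 : ∑ j, A i j ^ 2 ≤ n * c ^ 2 := by
    have : ∑ j, A i j ^ 2 ≤ ∑ _j : Fin n, c ^ 2 :=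
      Finset.sum_le_sum fun j _ => sq_le_sq' (by linarith [(abs_le.1 (hA i j)).1]) (abs_le.1 (hA i j)).2
    simpa using this
  have h3 : eunorm x ^ 2 = ∑ j, x j ^ 2 := by rw [eun_sq]; simp [dotProduct, sq]
  rw [h3]
  calc _ = (∑ j, A i j * x j) ^ 2 := by rw [sq]; rfl
    _ ≤ _ := h
    _ ≤ _ := by gcongr

lemma posdef_lower {m : ℕ} (A : Matrix (Fin m) (Fin m) ℝ) (hA : A.PosDef) :
    ∃ q : ℝ, 0 < q ∧ ∀ x : Fin m → ℝ, q * eunorm x ^ 2 ≤ x ⬝ᵥ A⁻¹.mulVec x := by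
  obtain ⟨K, hK, hKx⟩ := quad_bound A
  refine ⟨1 / (K + 1), by positivity, fun x => ?_⟩
  have hU : IsUnit A.det := (Matrix.isUnit_iff_isUnit_det A).1 hA.isUnit
  have hAt : Aᵀ = A := by simpa using hA.isHermitian.eq
  have hp : ∀ y : Fin m → ℝ, 0 ≤ y ⬝ᵥ A.mulVec y := fun y => by
    simpa using hA.posSemidef.dotProduct_mulVec_nonneg y
  -- y = A⁻¹ x - s x
  set s := 1 / (K + 1) with hs
  have hs0 : 0 < s := by positivity
  have h := hp (A⁻¹.mulVec x - s • x)
  have e0 : A.mulVec (A⁻¹.mulVec x) = x := by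
    rw [mulVec_mulVec, Matrix.mul_nonsing_inv _ hU, one_mulVec]
  have e1 : A⁻¹.mulVec x ⬝ᵥ A.mulVec x = x ⬝ᵥ x := by
    rw [dotProduct_mulVec, ← mulVec_transpose, hAt, e0]
  rw [mulVec_sub, mulVec_smul, e0, sub_dotProduct, dotProduct_sub, dotProduct_sub,
    dotProduct_smul, smul_dotProduct, smul_dotProduct, dotProduct_smul, e1, ← eun_sq,
    dotProduct_comm (A⁻¹.mulVec x) x] at h
  simp only [smul_eq_mul] at h
  have h3 : s * (s * (x ⬝ᵥ A.mulVec x)) ≤ s * eunorm x ^ 2 := by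
    have h4 := hKx x
    have h5 : s * (K + 1) = 1 := by rw [hs]; field_simp
    have h6 : s * (x ⬝ᵥ A.mulVec x) ≤ s * ((K + 1) * eunorm x ^ 2) := by
      gcongr; nlinarith [sq_nonneg (eunorm x)]
    have h7 : s * ((K + 1) * eunorm x ^ 2) = eunorm x ^ 2 := by rw [← mul_assoc, h5, one_mul]
    rw [h7] at h6
    gcongr
  linarith

section
attribute [local instance] Matrix.linftyOpNormedRing Matrix.linftyOpNormedAlgebra

lemma inv_deriv {m : ℕ} (P : ℝ → Matrix (Fin m) (Fin m) ℝ) (P' : Matrix (Fin m) (Fin m) ℝ) (t : ℝ)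
    (hP : ∀ i j, HasDerivAt (fun s => P s i j) (P' i j) t) (hu : IsUnit (P t)) (i j : Fin m) :
    HasDerivAt (fun s => (P s)⁻¹ i j) ((-((P t)⁻¹ * P' * (P t)⁻¹)) i j) t := by
  have h : HasDerivAt P P' t := by
    refine hasDerivAt_pi.2 fun i => hasDerivAt_pi.2 fun j => hP i j
  obtain ⟨u, hu⟩ := hu
  have h1 := hasFDerivAt_ringInverse (𝕜 := ℝ) u
  rw [hu] at h1
  have h2 := h1.comp_hasDerivAt t h
  have h3 := hasDerivAt_pi.1 (hasDerivAt_pi.1 h2 i) j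
  have hi : ((u⁻¹ : (Matrix (Fin m) (Fin m) ℝ)ˣ) : Matrix (Fin m) (Fin m) ℝ) = (P t)⁻¹ := by
    rw [← hu, Matrix.coe_units_inv]
  simp only [hi] at h3
  have e1 : (fun s => (P s)⁻¹ i j) = fun x => (Ring.inverse ∘ P) x i j := by
    funext s
    simp [Matrix.nonsing_inv_eq_ringInverse]
  rw [e1]
  have e2 : (-((P t)⁻¹ * P' * (P t)⁻¹)) =
      (-((ContinuousLinearMap.mulLeftRight ℝ (Matrix (Fin m) (Fin m) ℝ)) (P t)⁻¹) (P t)⁻¹) P' := by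
    simp
  rw [e2]
  exact h3
end

lemma decay (V V' w : ℝ → ℝ) (q c a b : ℝ) (hq : 0 < q) (hc : 0 < c) (ha : 1 ≤ a) (hb : 0 < b)
    (hV : ∀ t, 0 ≤ t → HasDerivAt V (V' t) t) (hw : ∀ t, 0 ≤ w t)
    (hlo : ∀ t, 0 ≤ t → q * w t ≤ V t) (hup : ∀ t, 0 ≤ t → V t ≤ (a + b * t) * w t)
    (hd : ∀ t, 0 ≤ t → V' t ≤ - c * w t) :
    (∃ B : ℝ, ∀ t, 0 ≤ t → Real.sqrt (w t) ≤ B) ∧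
      Tendsto (fun t => Real.sqrt (w t)) atTop (𝓝 0) := by
  set r := c / b with hr
  have hr0 : 0 < r := by positivity
  have hpos : ∀ t, 0 ≤ t → 1 ≤ a + b * t := fun t ht => by nlinarith [mul_nonneg hb.le ht]
  set G : ℝ → ℝ := fun t => V t * (a + b * t) ^ r with hG
  have hGd : ∀ t, 0 ≤ t → HasDerivAt G
      (V' t * (a + b * t) ^ r + V t * (b * r * (a + b * t) ^ (r - 1))) t := fun t ht => by
    have h1 : HasDerivAt (fun t : ℝ => a + b * t) b t := by
      simpa using ((hasDerivAt_id t).const_mul b).const_add a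
    exact (hV t ht).mul (h1.rpow_const (Or.inl (by linarith [hpos t ht])))
  have hGn : ∀ t, 0 ≤ t → V' t * (a + b * t) ^ r + V t * (b * r * (a + b * t) ^ (r - 1)) ≤ 0 := by
    intro t ht
    have hx := hpos t ht
    have hx0 : 0 < a + b * t := by linarith
    have e : (a + b * t) ^ r = (a + b * t) ^ (r - 1) * (a + b * t) := by
      rw [← Real.rpow_add_one hx0.ne']; ring_nf
    have e2 : b * r = c := by rw [hr]; field_simp
    rw [e, e2]
    have hy : 0 ≤ (a + b * t) ^ (r - 1) := by positivity
    have h1 : V' t * (a + b * t) + c * V t ≤ 0 := by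
      have := mul_le_mul_of_nonneg_right (hd t ht) hx0.le
      have := mul_le_mul_of_nonneg_left (hup t ht) hc.le
      nlinarith
    nlinarith [mul_nonneg hy (neg_nonneg.2 h1)]
  have hanti : AntitoneOn G (Set.Ici 0) := by
    apply antitoneOn_of_deriv_nonpos (convex_Ici 0)
    · exact fun t ht => (hGd t ht).continuousAt.continuousWithinAt
    · intro t ht
      rw [interior_Ici] at ht
      exact (hGd t (le_of_lt ht)).differentiableAt.differentiableWithinAt
    · intro t ht
      rw [interior_Ici] at ht
      rw [(hGd t (le_of_lt ht)).deriv]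
      exact hGn t (le_of_lt ht)
  have hmain : ∀ t, 0 ≤ t → w t ≤ G 0 / q * (a + b * t) ^ (-r) := by
    intro t ht
    have h1 : G t ≤ G 0 := hanti (Set.mem_Ici.2 le_rfl) ht ht
    have hx0 : 0 < a + b * t := by linarith [hpos t ht]
    have hy : 0 < (a + b * t) ^ r := by positivity
    have h2 : q * w t * (a + b * t) ^ r ≤ G 0 :=
      le_trans (mul_le_mul_of_nonneg_right (hlo t ht) hy.le) h1
    rw [Real.rpow_neg hx0.le, ← div_eq_mul_inv, div_div, le_div_iff₀ (by positivity)]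
    linarith
  have hG0 : 0 ≤ G 0 := by
    have := hlo 0 le_rfl
    have := hw 0
    have : 0 ≤ V 0 := by nlinarith
    have : 0 < a := by linarith
    simp only [hG]; positivity
  refine ⟨⟨Real.sqrt (G 0 / q), fun t ht => Real.sqrt_le_sqrt ?_⟩, ?_⟩
  · refine (hmain t ht).trans ?_
    have := Real.rpow_le_one_of_one_le_of_nonpos (hpos t ht) (neg_nonpos.2 hr0.le)
    exact mul_le_of_le_one_right (by positivity) this
  · have h1 : Tendsto (fun t : ℝ => a + b * t) atTop atTop :=
      tendsto_atTop_add_const_left _ _ (tendsto_id.const_mul_atTop hb)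
    have h2 := ((tendsto_rpow_neg_atTop hr0).comp h1).const_mul (G 0 / q)
    rw [mul_zero] at h2
    have h3 : Tendsto w atTop (𝓝 0) := by
      refine tendsto_of_tendsto_of_tendsto_of_le_of_le' tendsto_const_nhds h2
        (Eventually.of_forall hw) ?_
      filter_upwards [eventually_ge_atTop 0] with t ht using hmain t ht
    have h4 := (Real.continuous_sqrt.tendsto 0).comp h3
    rw [Real.sqrt_zero] at h4
    exact h4

lemma scalar_bound (α₁ α₂ α₃ kθ lam kn2 kn3 kn4 A r3 r4 κ κm E F H T e1 f1 h1 hx yo yy ts tS z O : ℝ)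
    (hkθ : 0 < kθ) (hkn2 : 0 < kn2) (hkn3 : 0 < kn3) (hkn4 : kn4 ≥ 1 / 2)
    (ha1 : 1 ≤ α₁) (ha3 : 1 ≤ α₃)
    (hκ : 1 + kn2 * A ^ 2 + kn4 * r3 ^ 2 ≤ κ)
    (hκm : α₂ + kn2 * A ^ 2 + kn3 * r4 ^ 2 + kn4 * r3 ^ 2 ≤ κm)
    (he1 : κ * E ^ 2 ≤ e1) (hf1 : κ * F ^ 2 ≤ f1) (hh1 : κm * H ^ 2 ≤ h1)
    (hz : z ^ 2 = E ^ 2 + F ^ 2 + H ^ 2)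
    (hhx : hx ≤ H * (r4 * z)) (hts : -(kθ * ts) ≤ T * (A * z))
    (hO : O ≤ r3 ^ 2 * z ^ 2) (hyo : 0 ≤ yy + 2 * yo + O)
    (htS : lam * T ^ 2 ≤ tS) :
    - α₁ * e1 - α₃ * f1 - h1 + hx - yo - 1 / 2 * yy - kθ * ts - kθ * tS ≤
      - (min (min α₁ (min α₂ α₃) - 1 / (4 * kn3)) (kθ * lam - 1 / (4 * kn2)))
        * (E ^ 2 + F ^ 2 + H ^ 2 + T ^ 2) := by
  set μ := min α₁ (min α₂ α₃)
  have m1 : μ ≤ α₁ := min_le_left _ _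
  have m2 : μ ≤ α₂ := (min_le_right _ _).trans (min_le_left _ _)
  have m3 : μ ≤ α₃ := (min_le_right _ _).trans (min_le_right _ _)
  set c := min (μ - 1 / (4 * kn3)) (kθ * lam - 1 / (4 * kn2))
  have c1 : c ≤ μ - 1 / (4 * kn3) := min_le_left _ _
  have c2 : c ≤ kθ * lam - 1 / (4 * kn2) := min_le_right _ _
  have y1 : H * (r4 * z) ≤ kn3 * r4 ^ 2 * H ^ 2 + 1 / (4 * kn3) * z ^ 2 := by
    have : kn3 * r4 ^ 2 * H ^ 2 + 1 / (4 * kn3) * z ^ 2 - H * (r4 * z)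
      = (2 * kn3 * r4 * H - z) ^ 2 / (4 * kn3) := by field_simp; ring
    have : 0 ≤ (2 * kn3 * r4 * H - z) ^ 2 / (4 * kn3) := by positivity
    linarith
  have y2 : T * (A * z) ≤ kn2 * A ^ 2 * z ^ 2 + 1 / (4 * kn2) * T ^ 2 := by
    have : kn2 * A ^ 2 * z ^ 2 + 1 / (4 * kn2) * T ^ 2 - T * (A * z)
      = (2 * kn2 * A * z - T) ^ 2 / (4 * kn2) := by field_simp; ring
    have : 0 ≤ (2 * kn2 * A * z - T) ^ 2 / (4 * kn2) := by positivity
    linarith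
  set g := kn2 * A ^ 2 + kn4 * r3 ^ 2 with hg
  have g0 : 0 ≤ g := by positivity
  have b : ∀ α X x : ℝ, 1 ≤ α → μ ≤ α → κ * X ^ 2 ≤ x → (μ + g) * X ^ 2 ≤ α * x := by
    intro α X x h1 h2 h3
    have h4 : (1 + g) * X ^ 2 ≤ x := le_trans (by gcongr; linarith) h3
    calc (μ + g) * X ^ 2 ≤ (α * (1 + g)) * X ^ 2 := by gcongr; nlinarith
      _ = α * ((1 + g) * X ^ 2) := by ring
      _ ≤ _ := by gcongr
  have b1 := b α₁ E e1 ha1 m1 he1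
  have b3 := b α₃ F f1 ha3 m3 hf1
  have b2 : (μ + g + kn3 * r4 ^ 2) * H ^ 2 ≤ h1 := le_trans (by gcongr; linarith) hh1
  have o1 : 1 / 2 * O ≤ kn4 * (r3 ^ 2 * z ^ 2) := by
    have : 0 ≤ r3 ^ 2 * z ^ 2 := by positivity
    nlinarith
  have s1 := mul_le_mul_of_nonneg_left htS hkθ.le
  have z1 := mul_le_mul_of_nonneg_right c1 (sq_nonneg z)
  have t1 := mul_le_mul_of_nonneg_right c2 (sq_nonneg T)
  have hgz : kn2 * A ^ 2 * z ^ 2 + kn4 * (r3 ^ 2 * z ^ 2) = g * (E ^ 2 + F ^ 2 + H ^ 2) := by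
    rw [← hz, hg]; ring
  have hμ : μ * z ^ 2 = μ * (E ^ 2 + F ^ 2 + H ^ 2) := by rw [hz]
  have hcz : c * z ^ 2 = c * (E ^ 2 + F ^ 2 + H ^ 2) := by rw [hz]
  linarith

/-- Theorem 3, output-feedback composite adaptation based
concurrent learning. Under the stated gain conditions, every solution of the
closed-loop composite-adaptation output-feedback system is such that
`v = (e, e_f, η, θ̃)` is bounded on `[0, ∞)` and `v(t) → 0` as `t → ∞`; in
particular the tracking error `e` and the parameter estimation error `θ̃`
converge to the origin. -/
theorem ofb_composite_concurrent_learning_asymptotic_convergence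
    {n p N : ℕ} [NeZero n] [NeZero p]
    -- constants
    (α₁ α₂ α₃ k kθ m₁ m₂ lam lamd ρbar₃ kn2 kn3 kn4 : ℝ)
    (hα₁ : 0 < α₁) (hα₂ : 0 < α₂) (hα₃ : 0 < α₃) (hk : 0 < k)
    (hkθ : 0 < kθ) (hm₁ : 0 < m₁) (hm₁₂ : m₁ ≤ m₂)
    (hlam : 0 < lam) (hlamd : 0 ≤ lamd) (hρbar₃ : 0 ≤ ρbar₃)
    (hkn2 : 0 < kn2) (hkn3 : 0 < kn3) (hkn4 : 0 < kn4)
    -- diagonal positive definite gain matrix `Ks = diagonal ks`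
    (ks : Fin n → ℝ) (hks : ∀ i, 0 < ks i)
    -- state error signals and their derivatives
    (e ef η e' ef' η' : ℝ → Fin n → ℝ)
    (θtil θtil' : ℝ → Fin p → ℝ)
    (he : ∀ t, 0 ≤ t → HasDerivAt e (e' t) t)
    (hef : ∀ t, 0 ≤ t → HasDerivAt ef (ef' t) t)
    (hη : ∀ t, 0 ≤ t → HasDerivAt η (η' t) t)
    (hθ : ∀ t, 0 ≤ t → HasDerivAt θtil (θtil' t) t)
    -- surrogate filter relations: ė = η - α₁ e - α₂ e_f, ė_f = -α₃ e_f + α₂ e - k η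
    (hedyn : ∀ t, 0 ≤ t → e' t = η t - α₁ • e t - α₂ • ef t)
    (hefdyn : ∀ t, 0 ≤ t → ef' t = -α₃ • ef t + α₂ • e t - k • η t)
    -- inertia matrix, its derivative, and centripetal-Coriolis matrix
    (M M' C : ℝ → Matrix (Fin n) (Fin n) ℝ)
    (hM : ∀ t, 0 ≤ t → ∀ i j, HasDerivAt (fun s => M s i j) (M' t i j) t)
    (hMsymm : ∀ t, 0 ≤ t → (M t).IsHermitian)
    (hMlower : ∀ t, 0 ≤ t → ∀ ξ : Fin n → ℝ,
      m₁ * (eunorm ξ) ^ 2 ≤ ξ ⬝ᵥ (M t).mulVec ξ)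
    (hMupper : ∀ t, 0 ≤ t → ∀ ξ : Fin n → ℝ,
      ξ ⬝ᵥ (M t).mulVec ξ ≤ m₂ * (eunorm ξ) ^ 2)
    -- skew-symmetry property: ξᵀ(Ṁ - 2C)ξ = 0
    (hskew : ∀ t, 0 ≤ t → ∀ ξ : Fin n → ℝ,
      ξ ⬝ᵥ (M' t - (2 : ℝ) • C t).mulVec ξ = 0)
    -- regression matrices: continuous and bounded
    (Yd Ydf : ℝ → Matrix (Fin n) (Fin p) ℝ)
    (hYd : Continuous Yd) (hYdf : Continuous Ydf)
    (hYdbd : ∃ c : ℝ, ∀ t, 0 ≤ t → ∀ i j, |Yd t i j| ≤ c)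
    (hYdfbd : ∃ c : ℝ, ∀ t, 0 ≤ t → ∀ i j, |Ydf t i j| ≤ c)
    -- auxiliary terms χ, Ω and their bounds w.r.t. ‖z‖, z = (e, e_f, η),
    -- with bounded nonnegative functions ρ₃, ρ₄
    (χ Ωf : ℝ → Fin n → ℝ) (ρ₃ ρ₄ : ℝ → ℝ)
    (hρ₃ : ∀ t, 0 ≤ ρ₃ t) (hρ₄ : ∀ t, 0 ≤ ρ₄ t)
    (hρ₃bd : ∃ c : ℝ, ∀ t, 0 ≤ t → ρ₃ t ≤ c)
    (hρ₄bd : ∃ c : ℝ, ∀ t, 0 ≤ t → ρ₄ t ≤ c)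
    (hχ : ∀ t, 0 ≤ t → eunorm (χ t) ≤
      ρ₄ t * Real.sqrt ((eunorm (e t)) ^ 2 + (eunorm (ef t)) ^ 2 + (eunorm (η t)) ^ 2))
    (hΩf : ∀ t, 0 ≤ t → eunorm (Ωf t) ≤
      ρ₃ t * Real.sqrt ((eunorm (e t)) ^ 2 + (eunorm (ef t)) ^ 2 + (eunorm (η t)) ^ 2))
    -- prediction error ε = Ω + Y_{df} θ̃
    (ε : ℝ → Fin n → ℝ)
    (hε : ∀ t, ε t = Ωf t + (Ydf t).mulVec (θtil t))
    -- concurrent-learning data stack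
    (𝒴 : Fin N → Matrix (Fin n) (Fin p) ℝ)
    (Ω : Fin N → ℝ → Fin n → ℝ)
    (hΩ : ∀ t, 0 ≤ t →
      eunorm (∑ i, ((𝒴 i)ᵀ).mulVec (Ω i t)) ≤ (N : ℝ) * lamd * ρbar₃ *
        Real.sqrt ((eunorm (e t)) ^ 2 + (eunorm (ef t)) ^ 2 + (eunorm (η t)) ^ 2))
    -- λmin(Σᵢ 𝒴ᵢᵀ 𝒴ᵢ) ≥ λ̲ > 0
    (hstack : ∀ ξ : Fin p → ℝ,
      lam * (eunorm ξ) ^ 2 ≤ ξ ⬝ᵥ (∑ i, (𝒴 i)ᵀ * 𝒴 i).mulVec ξ)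
    -- time-varying least-squares gain matrix P with Ṗ = -P Y_{df}ᵀ Y_{df} P
    (P : ℝ → Matrix (Fin p) (Fin p) ℝ)
    (hP : ∀ t, 0 ≤ t → ∀ i j, HasDerivAt (fun s => P s i j)
      ((-(P t * (Ydf t)ᵀ * Ydf t * P t)) i j) t)
    (hP0 : (P 0).PosDef)
    (hPinv : ∀ t, 0 ≤ t → IsUnit (P t))
    -- closed-loop dynamics: M η̇ = -C η - α₂ k M η + Y_d θ̃ + χ + k Ks e_f - Ks e
    (hηdyn : ∀ t, 0 ≤ t → (M t).mulVec (η' t) =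
      -((C t).mulVec (η t)) - (α₂ * k) • ((M t).mulVec (η t))
        + (Yd t).mulVec (θtil t) + χ t
        + k • ((Matrix.diagonal ks).mulVec (ef t))
        - (Matrix.diagonal ks).mulVec (e t))
    -- composite parameter-estimation-error dynamics
    (hθdyn : ∀ t, 0 ≤ t → θtil' t =
      -((P t).mulVec (((Ydf t)ᵀ).mulVec (ε t)))
        - (P t).mulVec (((Yd t)ᵀ).mulVec (η t))
        - kθ • ((P t).mulVec (∑ i, ((𝒴 i)ᵀ).mulVec (Ω i t)))
        - kθ • ((P t).mulVec ((∑ i, (𝒴 i)ᵀ * 𝒴 i).mulVec (θtil t))))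
    -- gain conditions
    (hgainKs : ∀ t, 0 ≤ t →
      (⨅ i, ks i) ≥ 1 + kn2 * (kθ * (N : ℝ) * lamd * ρbar₃) ^ 2 + kn4 * (ρ₃ t) ^ 2)
    (hgaink : ∀ t, 0 ≤ t → α₂ * k * m₁ ≥
      α₂ + kn2 * (kθ * (N : ℝ) * lamd * ρbar₃) ^ 2 + kn3 * (ρ₄ t) ^ 2 + kn4 * (ρ₃ t) ^ 2)
    (hα₁₃ : min α₁ α₃ ≥ 1)
    (hgain2 : kn2 > 1 / (4 * kθ * lam))
    (hgain3 : kn3 > 1 / (4 * min α₁ (min α₂ α₃)))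
    (hgain4 : kn4 ≥ 1 / 2) :
    -- v = (e, e_f, η, θ̃) is bounded on [0, ∞) and converges to the origin
    (∃ B : ℝ, ∀ t, 0 ≤ t →
      Real.sqrt ((eunorm (e t)) ^ 2 + (eunorm (ef t)) ^ 2 + (eunorm (η t)) ^ 2 +
        (eunorm (θtil t)) ^ 2) ≤ B) ∧
    Tendsto (fun t => Real.sqrt ((eunorm (e t)) ^ 2 + (eunorm (ef t)) ^ 2 +
      (eunorm (η t)) ^ 2 + (eunorm (θtil t)) ^ 2)) atTop (𝓝 0) := by
  obtain ⟨cY, hcY⟩ := hYdfbd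
  obtain ⟨b0, hb0, hb⟩ := mulVec_bound (m := n) (n := p) cY
  -- the inverse gain matrix
  set Q : ℝ → Matrix (Fin p) (Fin p) ℝ := fun t => (P t)⁻¹ with hQdef
  have hdet : ∀ t, 0 ≤ t → IsUnit (P t).det := fun t ht =>
    (Matrix.isUnit_iff_isUnit_det _).1 (hPinv t ht)
  have hQP : ∀ t, 0 ≤ t → ∀ x, (Q t).mulVec ((P t).mulVec x) = x := fun t ht x => by
    rw [mulVec_mulVec, Matrix.nonsing_inv_mul _ (hdet t ht), one_mulVec]
  have hQd : ∀ t, 0 ≤ t → ∀ i j, HasDerivAt (fun s => Q s i j) (((Ydf t)ᵀ * Ydf t) i j) t := by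
    intro t ht i j
    have h := inv_deriv P _ t (hP t ht) (hPinv t ht) i j
    have e1 : -((P t)⁻¹ * (-(P t * (Ydf t)ᵀ * Ydf t * P t)) * (P t)⁻¹) = (Ydf t)ᵀ * Ydf t := by
      calc _ = ((P t)⁻¹ * P t) * ((Ydf t)ᵀ * Ydf t) * (P t * (P t)⁻¹) := by
            simp only [Matrix.mul_neg, Matrix.neg_mul, neg_neg, Matrix.mul_assoc]
        _ = _ := by
            rw [Matrix.nonsing_inv_mul _ (hdet t ht), Matrix.mul_nonsing_inv _ (hdet t ht),
              Matrix.one_mul, Matrix.mul_one]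
    rw [e1] at h
    exact h
  have hQs : ∀ t, 0 ≤ t → (Q t)ᵀ = Q t := by
    intro t ht
    ext i j
    have hc : ∀ s ∈ Set.Icc 0 t, (fun s => Q s j i - Q s i j) s = (fun s => Q s j i - Q s i j) 0 := by
      apply constant_of_has_deriv_right_zero
      · exact fun s hs => ((hQd s hs.1 j i).sub (hQd s hs.1 i j)).continuousAt.continuousWithinAt
      · intro s hs
        have h := (hQd s hs.1 j i).sub (hQd s hs.1 i j)
        have e1 : ((Ydf s)ᵀ * Ydf s) j i - ((Ydf s)ᵀ * Ydf s) i j = 0 := by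
          have : ((Ydf s)ᵀ * Ydf s)ᵀ = (Ydf s)ᵀ * Ydf s := by simp
          have := congrFun (congrFun this i) j
          rw [transpose_apply] at this
          linarith
        rw [e1] at h
        exact h.hasDerivWithinAt
    have h0 : (Q 0)ᵀ = Q 0 := by
      have : (P 0)ᵀ = P 0 := by simpa using hP0.isHermitian.eq
      rw [hQdef]; simp only
      rw [Matrix.transpose_nonsing_inv, this]
    have h1 := hc t ⟨ht, le_rfl⟩
    have h2 := congrFun (congrFun h0 i) j
    simp only [transpose_apply] at h1 h2 ⊢
    linarith
  obtain ⟨q, hq, hqlo⟩ := posdef_lower (P 0) hP0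
  obtain ⟨a0, ha0, haup⟩ := quad_bound (Q 0)
  have hRd : ∀ (x : Fin p → ℝ) (t : ℝ), 0 ≤ t → HasDerivAt (fun s => x ⬝ᵥ (Q s).mulVec x)
      (x ⬝ᵥ ((Ydf t)ᵀ * Ydf t).mulVec x) t := by
    intro x t ht
    have h := quad_deriv Q _ (fun _ => x) 0 t (hQd t ht) (hasDerivAt_const t x) (hQs t ht)
    simpa using h
  have hYY : ∀ (t : ℝ) (x : Fin p → ℝ), x ⬝ᵥ ((Ydf t)ᵀ * Ydf t).mulVec x =
      (Ydf t).mulVec x ⬝ᵥ (Ydf t).mulVec x := by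
    intro t x
    rw [← mulVec_mulVec, dotProduct_mulVec, vecMul_transpose]
  have hQlo : ∀ t, 0 ≤ t → ∀ x : Fin p → ℝ, q * eunorm x ^ 2 ≤ x ⬝ᵥ (Q t).mulVec x := by
    intro t ht x
    refine (hqlo x).trans ?_
    have hm : MonotoneOn (fun s => x ⬝ᵥ (Q s).mulVec x) (Set.Ici 0) := by
      apply monotoneOn_of_deriv_nonneg (convex_Ici 0)
      · exact fun t ht => (hRd x t ht).continuousAt.continuousWithinAt
      · intro t ht
        rw [interior_Ici] at ht
        exact (hRd x t (le_of_lt ht)).differentiableAt.differentiableWithinAt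
      · intro t ht
        rw [interior_Ici] at ht
        rw [(hRd x t (le_of_lt ht)).deriv, hYY, ← eun_sq]
        positivity
    exact hm (Set.mem_Ici.2 le_rfl) ht ht
  have hQup : ∀ t, 0 ≤ t → ∀ x : Fin p → ℝ, x ⬝ᵥ (Q t).mulVec x ≤ (a0 + b0 * t) * eunorm x ^ 2 := by
    intro t ht x
    have hd : ∀ t, 0 ≤ t → HasDerivAt
        (fun s => x ⬝ᵥ (Q s).mulVec x - (b0 * eunorm x ^ 2) * s)
        (x ⬝ᵥ ((Ydf t)ᵀ * Ydf t).mulVec x - b0 * eunorm x ^ 2) t := by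
      intro t ht
      have := (hRd x t ht).sub ((hasDerivAt_id t).const_mul (b0 * eunorm x ^ 2))
      rw [mul_one] at this
      exact this
    have hm : AntitoneOn (fun s => x ⬝ᵥ (Q s).mulVec x - (b0 * eunorm x ^ 2) * s) (Set.Ici 0) := by
      apply antitoneOn_of_deriv_nonpos (convex_Ici 0)
      · exact fun t ht => (hd t ht).continuousAt.continuousWithinAt
      · intro t ht
        rw [interior_Ici] at ht
        exact (hd t (le_of_lt ht)).differentiableAt.differentiableWithinAt
      · intro t ht
        rw [interior_Ici] at ht
        rw [(hd t (le_of_lt ht)).deriv]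
        linarith [hb (Ydf t) (hcY t (le_of_lt ht)) x]
    have h1 := hm (Set.mem_Ici.2 le_rfl) ht ht
    have h2 := haup x
    simp only at h1
    nlinarith
  -- bounds for the diagonal gain
  set κ := ⨅ i, ks i with hκdef
  have hκle : ∀ i, κ ≤ ks i := fun i => ciInf_le (Set.finite_range ks).bddBelow i
  have hKlo : ∀ x : Fin n → ℝ, κ * eunorm x ^ 2 ≤ x ⬝ᵥ (Matrix.diagonal ks).mulVec x := by
    intro x
    rw [eun_sq]
    simp only [dotProduct, mulVec_diagonal, Finset.mul_sum]
    refine Finset.sum_le_sum fun i _ => ?_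
    nlinarith [hκle i, mul_self_nonneg (x i)]
  obtain ⟨K1, hK1, hKup⟩ := quad_bound (Matrix.diagonal ks)
  have hκ1 : 1 ≤ κ := by
    have := hgainKs 0 le_rfl
    have : 0 ≤ kn2 * (kθ * (N : ℝ) * lamd * ρbar₃) ^ 2 + kn4 * (ρ₃ 0) ^ 2 := by positivity
    linarith
  have hKs : (Matrix.diagonal ks)ᵀ = Matrix.diagonal ks := by simp
  have hMs : ∀ t, 0 ≤ t → (M t)ᵀ = M t := fun t ht => by simpa using (hMsymm t ht).eq
  set S := ∑ i, (𝒴 i)ᵀ * 𝒴 i with hS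
  set D := Matrix.diagonal ks with hD
  set V : ℝ → ℝ := fun t => 1 / 2 * (e t ⬝ᵥ D.mulVec (e t) + ef t ⬝ᵥ D.mulVec (ef t)
    + η t ⬝ᵥ (M t).mulVec (η t) + θtil t ⬝ᵥ (Q t).mulVec (θtil t)) with hV
  have hVd : ∀ t, 0 ≤ t → HasDerivAt V
      (- α₁ * (e t ⬝ᵥ D.mulVec (e t)) - α₃ * (ef t ⬝ᵥ D.mulVec (ef t))
        - α₂ * k * (η t ⬝ᵥ (M t).mulVec (η t)) + η t ⬝ᵥ χ t
        - (Ydf t).mulVec (θtil t) ⬝ᵥ Ωf t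
        - 1 / 2 * ((Ydf t).mulVec (θtil t) ⬝ᵥ (Ydf t).mulVec (θtil t))
        - kθ * (θtil t ⬝ᵥ (∑ i, ((𝒴 i)ᵀ).mulVec (Ω i t)))
        - kθ * (θtil t ⬝ᵥ S.mulVec (θtil t))) t := by
    intro t ht
    have d1 := quad_deriv (fun _ => D) 0 e (e' t) t (fun i j => hasDerivAt_const t _) (he t ht) hKs
    have d2 := quad_deriv (fun _ => D) 0 ef (ef' t) t (fun i j => hasDerivAt_const t _) (hef t ht) hKs
    have d3 := quad_deriv M (M' t) η (η' t) t (hM t ht) (hη t ht) (hMs t ht)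
    have d4 := quad_deriv Q _ θtil (θtil' t) t (hQd t ht) (hθ t ht) (hQs t ht)
    refine ((((d1.add d2).add d3).add d4).const_mul (1 / 2 : ℝ)).congr_deriv ?_
    have sw : ∀ x y : Fin n → ℝ, x ⬝ᵥ D.mulVec y = y ⬝ᵥ D.mulVec x := by
      intro x y
      rw [dotProduct_mulVec, ← mulVec_transpose, hKs, dotProduct_comm]
    have e1 : e t ⬝ᵥ D.mulVec (e' t) = η t ⬝ᵥ D.mulVec (e t) - α₁ * (e t ⬝ᵥ D.mulVec (e t))
        - α₂ * (e t ⬝ᵥ D.mulVec (ef t)) := by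
      rw [hedyn t ht]
      simp only [mulVec_sub, mulVec_smul, dotProduct_sub, dotProduct_smul, smul_eq_mul]
      rw [sw (e t) (η t)]
    have e2 : ef t ⬝ᵥ D.mulVec (ef' t) = - α₃ * (ef t ⬝ᵥ D.mulVec (ef t))
        + α₂ * (e t ⬝ᵥ D.mulVec (ef t)) - k * (η t ⬝ᵥ D.mulVec (ef t)) := by
      rw [hefdyn t ht]
      simp only [mulVec_sub, mulVec_add, mulVec_smul, dotProduct_sub, dotProduct_add,
        dotProduct_smul, smul_eq_mul]
      rw [sw (ef t) (η t), sw (ef t) (e t)]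
    have e3 : η t ⬝ᵥ (M t).mulVec (η' t) = - (η t ⬝ᵥ (C t).mulVec (η t))
        - α₂ * k * (η t ⬝ᵥ (M t).mulVec (η t)) + η t ⬝ᵥ (Yd t).mulVec (θtil t) + η t ⬝ᵥ χ t
        + k * (η t ⬝ᵥ D.mulVec (ef t)) - η t ⬝ᵥ D.mulVec (e t) := by
      rw [hηdyn t ht]
      simp only [dotProduct_sub, dotProduct_add, dotProduct_neg, dotProduct_smul, smul_eq_mul]
    have e4 : η t ⬝ᵥ (M' t).mulVec (η t) = 2 * (η t ⬝ᵥ (C t).mulVec (η t)) := by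
      have := hskew t ht (η t)
      simp only [sub_mulVec, smul_mulVec, dotProduct_sub, dotProduct_smul, smul_eq_mul] at this
      linarith
    have e5 : θtil t ⬝ᵥ (Q t).mulVec (θtil' t) = - ((Ydf t).mulVec (θtil t) ⬝ᵥ Ωf t)
        - (Ydf t).mulVec (θtil t) ⬝ᵥ (Ydf t).mulVec (θtil t)
        - η t ⬝ᵥ (Yd t).mulVec (θtil t)
        - kθ * (θtil t ⬝ᵥ (∑ i, ((𝒴 i)ᵀ).mulVec (Ω i t)))
        - kθ * (θtil t ⬝ᵥ S.mulVec (θtil t)) := by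
      rw [hθdyn t ht, hε t]
      simp only [mulVec_sub, mulVec_neg, mulVec_smul _ kθ, hQP t ht, dotProduct_sub,
        dotProduct_neg, dotProduct_smul, smul_eq_mul]
      have f1 : θtil t ⬝ᵥ ((Ydf t)ᵀ).mulVec (Ωf t + (Ydf t).mulVec (θtil t))
          = (Ydf t).mulVec (θtil t) ⬝ᵥ Ωf t
            + (Ydf t).mulVec (θtil t) ⬝ᵥ (Ydf t).mulVec (θtil t) := by
        rw [dotProduct_mulVec, vecMul_transpose, dotProduct_add]
      have f2 : θtil t ⬝ᵥ ((Yd t)ᵀ).mulVec (η t) = η t ⬝ᵥ (Yd t).mulVec (θtil t) := by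
        rw [dotProduct_mulVec, vecMul_transpose, dotProduct_comm]
      rw [f1, f2]
      ring
    have e6 := hYY t (θtil t)
    rw [e1, e2, e3, e4, e5, e6]
    simp only [zero_mulVec, dotProduct_zero]
    ring
  have hc : 0 < min (min α₁ (min α₂ α₃) - 1 / (4 * kn3)) (kθ * lam - 1 / (4 * kn2)) := by
    have hμ : 0 < min α₁ (min α₂ α₃) := lt_min hα₁ (lt_min hα₂ hα₃)
    apply lt_min
    · rw [gt_iff_lt, div_lt_iff₀ (by positivity)] at hgain3
      rw [sub_pos, div_lt_iff₀ (by positivity)]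
      linarith
    · rw [gt_iff_lt, div_lt_iff₀ (by positivity)] at hgain2
      rw [sub_pos, div_lt_iff₀ (by positivity)]
      linarith
  have hb1 : ∀ t, 0 ≤ t → 0 ≤ b0 * t := fun t ht => mul_nonneg hb0 ht
  refine decay V _ _ (1 / 2 * min 1 (min m₁ q)) _ (1 + K1 + m₂ + a0) (b0 + 1) ?_ hc ?_
    (by positivity) hVd (fun t => by positivity) ?_ ?_ ?_
  · have : 0 < min 1 (min m₁ q) := lt_min one_pos (lt_min hm₁ hq)
    positivity
  · linarith
  · intro t ht
    have l1 := hKlo (e t)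
    have l2 := hKlo (ef t)
    have l3 := hMlower t ht (η t)
    have l4 := hQlo t ht (θtil t)
    set r := min 1 (min m₁ q)
    have r1 : r ≤ κ := (min_le_left _ _).trans hκ1
    have r2 : r ≤ m₁ := (min_le_right _ _).trans (min_le_left _ _)
    have r3 : r ≤ q := (min_le_right _ _).trans (min_le_right _ _)
    have s1 := mul_le_mul_of_nonneg_right r1 (sq_nonneg (eunorm (e t)))
    have s2 := mul_le_mul_of_nonneg_right r1 (sq_nonneg (eunorm (ef t)))
    have s3 := mul_le_mul_of_nonneg_right r2 (sq_nonneg (eunorm (η t)))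
    have s4 := mul_le_mul_of_nonneg_right r3 (sq_nonneg (eunorm (θtil t)))
    simp only [hV]
    linarith
  · intro t ht
    have l1 := hKup (e t)
    have l2 := hKup (ef t)
    have l3 := hMupper t ht (η t)
    have l4 := hQup t ht (θtil t)
    set r := 1 + K1 + m₂ + a0 + (b0 + 1) * t with hr
    have hbt := hb1 t ht
    have r1 : K1 ≤ r := by rw [hr]; linarith
    have r2 : m₂ ≤ r := by rw [hr]; linarith
    have r3 : a0 + b0 * t ≤ r := by rw [hr]; linarith
    have r0 : 0 ≤ r := hK1.trans r1
    have s1 := mul_le_mul_of_nonneg_right r1 (sq_nonneg (eunorm (e t)))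
    have s2 := mul_le_mul_of_nonneg_right r1 (sq_nonneg (eunorm (ef t)))
    have s3 := mul_le_mul_of_nonneg_right r2 (sq_nonneg (eunorm (η t)))
    have s4 := mul_le_mul_of_nonneg_right r3 (sq_nonneg (eunorm (θtil t)))
    have w0 : 0 ≤ r * (eunorm (e t) ^ 2 + eunorm (ef t) ^ 2 + eunorm (η t) ^ 2
      + eunorm (θtil t) ^ 2) := by positivity
    simp only [hV]
    linarith
  · intro t ht
    set z := Real.sqrt ((eunorm (e t)) ^ 2 + (eunorm (ef t)) ^ 2 + (eunorm (η t)) ^ 2) with hz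
    have hz2 : z ^ 2 = (eunorm (e t)) ^ 2 + (eunorm (ef t)) ^ 2 + (eunorm (η t)) ^ 2 :=
      Real.sq_sqrt (by positivity)
    have hz0 : 0 ≤ z := Real.sqrt_nonneg _
    refine scalar_bound α₁ α₂ α₃ kθ lam kn2 kn3 kn4 (kθ * (N : ℝ) * lamd * ρbar₃) (ρ₃ t) (ρ₄ t)
      κ (α₂ * k * m₁) (eunorm (e t)) (eunorm (ef t)) (eunorm (η t)) (eunorm (θtil t)) _ _ _ _ _ _ _
      _ z (Ωf t ⬝ᵥ Ωf t) hkθ hkn2 hkn3 hgain4 (hα₁₃.le.trans (min_le_left _ _))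
      (hα₁₃.le.trans (min_le_right _ _)) (hgainKs t ht) (hgaink t ht) (hKlo _) (hKlo _) ?_ hz2 ?_ ?_
      ?_ ?_ (hstack _)
    · rw [mul_assoc]
      exact mul_le_mul_of_nonneg_left (hMlower t ht (η t)) (by positivity)
    · refine (le_abs_self _).trans ((eun_cs _ _).trans ?_)
      exact mul_le_mul_of_nonneg_left (hχ t ht) (eun_nonneg _)
    · have h1 := (neg_le_abs _).trans (eun_cs (θtil t) (∑ i, ((𝒴 i)ᵀ).mulVec (Ω i t)))
      have h2 := h1.trans (mul_le_mul_of_nonneg_left (hΩ t ht) (eun_nonneg (θtil t)))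
      have h3 := mul_le_mul_of_nonneg_left h2 hkθ.le
      linarith
    · rw [← eun_sq, ← mul_pow]
      exact pow_le_pow_left₀ (eun_nonneg _) (hΩf t ht) 2
    · have h := sq_nonneg (eunorm ((Ydf t).mulVec (θtil t) + Ωf t))
      rw [eun_sq, dotProduct_add, add_dotProduct, add_dotProduct,
        dotProduct_comm (Ωf t) ((Ydf t).mulVec (θtil t))] at h
      linarith
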